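/- For every i ∈ {1, …, |N(σ)|}: E[λ_i] ≤ α·E[C(π*)]·ε_i/(Q − f(ρ_i)). -/

import Mathlib

/-!
Common framework for the Stochastic Submodular Cover problem
(Hellerstein–Kletenik–Parthasarathy, "A Tight Bound for Stochastic Submodular Cover").
-/

namespace SSC

open Finset
open scoped Classical

noncomputable section

variable {E O : Type*}

/-- A subrealization assigns to each item either a state or `none` (unassigned).
A realization corresponds to the case where every item is assigned. -/
abbrev Sub (E O : Type*) := E → Option O

/-- `subext ψ ψ'` means `ψ ⊆ ψ'` as partial assignments of states to items. -/
def subext (ψ ψ' : Sub E O) : Prop := ∀ e o, ψ e = some o → ψ' e = some o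

/-- `ssubext ψ ψ'` means `ψ ⊂ ψ'` (strict extension). -/
def ssubext (ψ ψ' : Sub E O) : Prop := subext ψ ψ' ∧ ψ ≠ ψ'

/-- Extend a subrealization `ψ` by assigning state `o` to item `e`. -/
def updateSub [DecidableEq E] (ψ : Sub E O) (e : E) (o : O) : Sub E O :=
  fun e' => if e' = e then some o else ψ e'

/-- View a (full) realization as a subrealization. -/
def toSub (φ : E → O) : Sub E O := fun e => some (φ e)

variable [Fintype E] [DecidableEq E] [Fintype O] [DecidableEq O]

/-- An instance of the Stochastic Submodular Cover problem: positive item costs `c`,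
a probability mass function `p` on realizations with mutually independent item states,
and a utility function `f` on subrealizations which is zero on the empty subrealization,
nonnegative, monotone and submodular (pointwise polymatroid), and equal to the goal
value `Q > 0` on every full realization (coverability). -/
structure Problem (E O : Type*) [Fintype E] [DecidableEq E] [Fintype O] [DecidableEq O] where
  c : E → ℝ
  c_pos : ∀ e, 0 < c e
  p : (E → O) → ℝ
  p_nonneg : ∀ φ, 0 ≤ p φ
  p_sum : ∑ φ : E → O, p φ = 1
  indep : ∀ φ : E → O, p φ = ∏ e : E, ∑ φ' : E → O, if φ' e = φ e then p φ' else 0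
  f : Sub E O → ℝ
  f_nonneg : ∀ ψ, 0 ≤ f ψ
  f_empty : f (fun _ => none) = 0
  f_mono : ∀ ψ ψ' : Sub E O, subext ψ ψ' → f ψ ≤ f ψ'
  f_submod : ∀ (ψ ψ' : Sub E O) (e : E) (o : O), subext ψ ψ' → ψ' e = none →
      f (updateSub ψ' e o) - f ψ' ≤ f (updateSub ψ e o) - f ψ
  Q : ℝ
  Q_pos : 0 < Q
  f_cover : ∀ φ : E → O, f (toSub φ) = Q

variable (M : Problem E O)

/-- Expectation of a random variable `X` with respect to the random realization `Φ`. -/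
def Ex (X : (E → O) → ℝ) : ℝ := ∑ φ : E → O, M.p φ * X φ

/-- Probability of an event `A` of the random realization `Φ`. -/
def Pr (A : (E → O) → Prop) : ℝ := ∑ φ : E → O, if A φ then M.p φ else 0

/-- Conditional expectation `E[X | A]`. -/
def cEx (X : (E → O) → ℝ) (A : (E → O) → Prop) : ℝ :=
  (∑ φ : E → O, if A φ then M.p φ * X φ else 0) / Pr M A

/-- The random marginal increase in utility `F_ψ(e)` from observing the state of `e`. -/
def Fm (ψ : Sub E O) (e : E) (φ : E → O) : ℝ := M.f (updateSub ψ e (φ e)) - M.f ψ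

/-- The unit price `υ(e|ψ) = c(e) / E[F_ψ(e)]`. -/
def price (ψ : Sub E O) (e : E) : ℝ := M.c e / Ex M (Fm M ψ e)

/-- An adaptive covering policy: at every subrealization `ψ` with `f ψ < Q` it selects an
item outside `dom ψ`. -/
def IsPolicy (π : Sub E O → E) : Prop := ∀ ψ : Sub E O, M.f ψ < M.Q → ψ (π ψ) = none

/-- The `α`-approximate adaptive greedy policy: at every `ψ` with `f ψ < Q` the unit price of
the selected item `σ ψ` is at most `α` times the minimum unit price, i.e.
`υ(σ ψ | ψ) ≤ α · υ(e | ψ)` for every `e ∉ dom ψ`, written multiplicatively so that infinite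
unit prices (zero expected marginal utility) are handled correctly. -/
def IsGreedy (α : ℝ) (σ : Sub E O → E) : Prop :=
  IsPolicy M σ ∧
    ∀ ψ : Sub E O, M.f ψ < M.Q → ∀ e : E, ψ e = none →
      M.c (σ ψ) * Ex M (Fm M ψ e) ≤ α * M.c e * Ex M (Fm M ψ (σ ψ))

/-- One step of executing policy `π` on realization `φ`. -/
def stepPol (π : Sub E O → E) (φ : E → O) (ψ : Sub E O) : Sub E O :=
  if M.f ψ < M.Q then updateSub ψ (π ψ) (φ (π ψ)) else ψ

/-- The subrealization reached after `n` steps of executing `π` on `φ`. -/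
def execAux (π : Sub E O → E) (φ : E → O) : ℕ → Sub E O
  | 0 => fun _ => none
  | n + 1 => stepPol M π φ (execAux π φ n)

/-- The cover `Ψ(π)` constructed by executing `π` on realization `φ`. -/
def cover (π : Sub E O → E) (φ : E → O) : Sub E O := execAux M π φ (Fintype.card E)

/-- `ψ` is visited when executing `π` on realization `φ`. -/
def visits (π : Sub E O → E) (φ : E → O) (ψ : Sub E O) : Prop := ∃ n, execAux M π φ n = ψ

/-- The set `S(π)` of items selected when executing `π` on `φ`. -/
def Ssel (π : Sub E O → E) (φ : E → O) : Finset E :=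
  Finset.univ.filter fun e => cover M π φ e ≠ none

/-- The cost `C(π)` incurred when executing `π` on `φ`. -/
def C (π : Sub E O → E) (φ : E → O) : ℝ := ∑ e ∈ Ssel M π φ, M.c e

/-- An adaptive covering policy of minimum expected cost. -/
def IsOptimal (π : Sub E O → E) : Prop :=
  IsPolicy M π ∧ ∀ π' : Sub E O → E, IsPolicy M π' → Ex M (C M π) ≤ Ex M (C M π')

/-- `N(π)`: the non-leaf nodes of the decision tree of `π` — subrealizations with
`f ψ < Q` that are visited with positive probability. -/
def Nnodes (π : Sub E O → E) : Finset (Sub E O) :=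
  Finset.univ.filter fun ψ => M.f ψ < M.Q ∧ 0 < Pr M fun φ => visits M π φ ψ

/-- The event `ψ ↝ i`, for a marker located at utility value `b = f(ρ_i)`:
`ψ` is the last subrealization visited by `σ` (on the given realization) whose
utility is at most `b`. -/
def leadsTo (σ : Sub E O → E) (b : ℝ) (ψ : Sub E O) (φ : E → O) : Prop :=
  visits M σ φ ψ ∧ M.f ψ ≤ b ∧
    ∀ ψ' : Sub E O, visits M σ φ ψ' → M.f ψ' ≤ b → subext ψ' ψ

/-- The revenue `λ_i = υ_ψ · ε_i` collected by `σ` from the marker located at utility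
value `b = f(ρ_i)` with interval length `εi`, where `ψ` is the unique subrealization
with `ψ ↝ i`. -/
def lam (σ : Sub E O → E) (b εi : ℝ) (φ : E → O) : ℝ :=
  ∑ ψ : Sub E O, if leadsTo M σ b ψ φ then price M ψ (σ ψ) * εi else 0

/-- The revenue `μ(e)` collected by the optimal policy `πs` from item `e`
(relative to the greedy policy `σ`, both executed on the same realization). -/
def mu (σ πs : Sub E O → E) (e : E) (φ : E → O) : ℝ :=
  if e ∈ Ssel M πs φ then
    if e ∈ Ssel M σ φ then
      ∑ ψ : Sub E O,
        if visits M σ φ ψ ∧ M.f ψ < M.Q ∧ σ ψ = e then price M ψ e * Fm M ψ e φ else 0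
    else M.c e
  else 0

/-- The total revenue `μ*` collected by the optimal policy. -/
def muStar (σ πs : Sub E O → E) (φ : E → O) : ℝ := ∑ e : E, mu M σ πs e φ

/-- Replay of the internal state of policy `πs` in the second stage of the hybrid policy:
starting from the empty subrealization, repeatedly query `πs`; an item whose state is
already recorded in `ψ'` is not re-selected, its recorded state being used instead. -/
def replayAux (πs : Sub E O → E) (ψ' : Sub E O) : ℕ → Sub E O
  | 0 => fun _ => none
  | n + 1 =>
    if M.f (replayAux πs ψ' n) < M.Q then
      match ψ' (πs (replayAux πs ψ' n)) with
      | some o => updateSub (replayAux πs ψ' n) (πs (replayAux πs ψ' n)) o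
      | none => replayAux πs ψ' n
    else replayAux πs ψ' n

/-- The hybrid policy `π^ψ0`: follow `σ` until `ψ0` is visited, then switch to executing
`πs` from the root of its tree, never re-selecting an item of `dom ψ0` and using the
state recorded in `ψ0` instead. -/
def hybrid (σ πs : Sub E O → E) (ψ0 : Sub E O) : Sub E O → E := fun ψ' =>
  if subext ψ0 ψ' then πs (replayAux M πs ψ' (Fintype.card E)) else σ ψ'

/-- `δ⁺_ψ0(e)`: the marginal utility obtained by the hybrid policy `π^ψ0` when it selects
`e` during its second stage, and `0` if `e` is not selected in the second stage. -/
def deltaPlus (σ πs : Sub E O → E) (ψ0 : Sub E O) (e : E) (φ : E → O) : ℝ :=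
  ∑ ψ' : Sub E O,
    if subext ψ0 ψ' ∧ visits M (hybrid M σ πs ψ0) φ ψ' ∧
        ssubext ψ' (cover M (hybrid M σ πs ψ0) φ) ∧ hybrid M σ πs ψ0 ψ' = e
    then Fm M ψ' e φ else 0


/-!
Fix a utility level `b < Q`. Charge every item `e` selected by the covering policy `π` to the last
node `ψ` visited by the greedy policy `σ` that has utility at most `b` and at which `e` is still
unobserved. Whether `e` is charged to `ψ` does not depend on the state of `e`, so by independence
the charged items contribute `Pr(e charged to ψ) * E[F_ψ(e)]` to the expected gain over `ψ`, and
the greedy rule bounds `υ_ψ * E[F_ψ(e)]` by `α * c(e)`. If `ψ` is the last node of utility at most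
`b`, then all items of `π` outside `dom ψ` are charged to `ψ`, and by submodularity their gains add
up to at least `Q - f(ψ) ≥ Q - b`. Every item is charged at most once, so summing over `ψ` gives
`E[υ_ψ] * (Q - b) ≤ α * E[C(π)]`.
-/

section Subrealization

omit [Fintype E] [Fintype O] [DecidableEq O]

section

omit [DecidableEq E]

variable {ψ ψ' : Sub E O}

theorem subext.refl (ψ : Sub E O) : subext ψ ψ := fun _ _ h => h

theorem subext.eq_none (h : subext ψ ψ') {e : E} (he : ψ' e = none) : ψ e = none := by
  by_contra hne
  obtain ⟨o, ho⟩ := Option.ne_none_iff_exists'.mp hne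
  simp [h e o ho] at he

theorem subext.eq_of_eq_none (h : subext ψ ψ') (h' : ∀ e, ψ e = none → ψ' e = none) :
    ψ = ψ' := by
  funext e
  cases he : ψ e with
  | none => exact (h' e he).symm
  | some o => exact (h e o he).symm

theorem subext.antisymm (h : subext ψ ψ') (h' : subext ψ' ψ) : ψ = ψ' :=
  h.eq_of_eq_none fun _ => h'.eq_none

end

theorem subext_updateSub {ψ : Sub E O} {e : E} (he : ψ e = none) (o : O) :
    subext ψ (updateSub ψ e o) := by
  intro e' o' he'
  have hne : e' ≠ e := by
    rintro rfl
    simp [he] at he'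
  simpa [updateSub, hne] using he'

/-- The subrealization `ψ ∪ φ|_A`, for a set `A` of items; on `A` the states of `φ` take
precedence over those of `ψ`. It records what is known when the items of `A` are observed after
`ψ`. -/
def overlay (ψ : Sub E O) (A : Finset E) (φ : E → O) : Sub E O :=
  fun e => if e ∈ A then some (φ e) else ψ e

theorem overlay_empty (ψ : Sub E O) (φ : E → O) : overlay ψ ∅ φ = ψ := by
  funext e
  simp [overlay]

theorem overlay_insert (ψ : Sub E O) (e : E) (A : Finset E) (φ : E → O) :
    overlay ψ (insert e A) φ = updateSub (overlay ψ A φ) e (φ e) := by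
  funext e'
  by_cases h : e' = e <;> simp [overlay, updateSub, h]

theorem subext_overlay {ψ : Sub E O} {A : Finset E} (hA : ∀ e ∈ A, ψ e = none) (φ : E → O) :
    subext ψ (overlay ψ A φ) := by
  intro e o he
  have heA : e ∉ A := fun h => by simp [hA e h] at he
  simpa [overlay, heA] using he

theorem update_iff_of_imp {P : (E → O) → Prop} {e : E}
    (h : ∀ φ o, P φ → P (Function.update φ e o)) (φ : E → O) (o : O) :
    P (Function.update φ e o) ↔ P φ :=
  ⟨fun hP => by simpa using h _ (φ e) hP, h φ o⟩

end Subrealization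

section Probability

theorem ex_mono {X Y : (E → O) → ℝ} (h : ∀ φ, X φ ≤ Y φ) : Ex M X ≤ Ex M Y :=
  sum_le_sum fun φ _ => mul_le_mul_of_nonneg_left (h φ) (M.p_nonneg φ)

theorem ex_nonneg {X : (E → O) → ℝ} (h : ∀ φ, 0 ≤ X φ) : 0 ≤ Ex M X :=
  sum_nonneg fun φ _ => mul_nonneg (M.p_nonneg φ) (h φ)

theorem ex_const (x : ℝ) : Ex M (fun _ => x) = x := by
  simp [Ex, ← sum_mul, M.p_sum]

theorem ex_sum {ι : Type*} (s : Finset ι) (X : ι → (E → O) → ℝ) :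
    Ex M (fun φ => ∑ j ∈ s, X j φ) = ∑ j ∈ s, Ex M (X j) := by
  simp only [Ex, mul_sum]
  exact sum_comm

theorem ex_ite_const (A : (E → O) → Prop) (x : ℝ) :
    Ex M (fun φ => if A φ then x else 0) = Pr M A * x := by
  simp only [Ex, Pr, sum_mul, mul_ite, mul_zero, ite_mul, zero_mul]

theorem pr_nonneg (A : (E → O) → Prop) : 0 ≤ Pr M A :=
  sum_nonneg fun φ _ => by split_ifs <;> simp [M.p_nonneg φ]

theorem pr_eq_zero {A : (E → O) → Prop} (h : ∀ φ, ¬ A φ) : Pr M A = 0 := by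
  simp [Pr, h]

theorem sum_pr_le_of_unique {ι : Type*} [Fintype ι] {A : ι → (E → O) → Prop}
    {B : (E → O) → Prop} (hAB : ∀ i φ, A i φ → B φ)
    (hA : ∀ i j φ, A i φ → A j φ → i = j) : ∑ i, Pr M (A i) ≤ Pr M B := by
  simp only [Pr]
  rw [sum_comm]
  refine sum_le_sum fun φ _ => ?_
  by_cases h : ∃ i, A i φ
  · obtain ⟨i, hi⟩ := h
    have hiff : ∀ j, A j φ ↔ j = i := fun j => ⟨fun hj => hA j i φ hj hi, fun hj => hj ▸ hi⟩
    simp [hiff, hAB i φ hi]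
  · push Not at h
    simpa [h] using by split_ifs <;> simp [M.p_nonneg φ]

theorem p_eq_prod_pr (φ : E → O) : M.p φ = ∏ e, Pr M fun φ' => φ' e = φ e := by
  rw [M.indep φ]
  unfold Pr
  congr!

theorem sum_pr_apply_eq (e : E) : ∑ o, Pr M (fun φ => φ e = o) = 1 := by
  unfold Pr
  rw [sum_comm]
  refine (sum_congr rfl fun φ _ => ?_).trans M.p_sum
  exact (Fintype.sum_eq_single (φ e) fun o ho => if_neg ho.symm).trans (if_pos rfl)

theorem p_mul_pr_eq_p_update_mul_pr (φ : E → O) (e : E) (o : O) :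
    M.p φ * Pr M (fun φ' => φ' e = o) =
      M.p (Function.update φ e o) * Pr M (fun φ' => φ' e = φ e) := by
  have hp : ∀ φ : E → O, M.p φ =
      Pr M (fun φ' => φ' e = φ e) * ∏ x ∈ univ.erase e, Pr M (fun φ' => φ' x = φ x) :=
    fun φ => by
      rw [mul_prod_erase univ (fun x => Pr M fun φ' => φ' x = φ x) (mem_univ e),
        ← p_eq_prod_pr]
  have hrest : ∏ x ∈ univ.erase e, Pr M (fun φ' => φ' x = Function.update φ e o x) =
      ∏ x ∈ univ.erase e, Pr M (fun φ' => φ' x = φ x) :=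
    prod_congr rfl fun x hx => by rw [Function.update_of_ne (ne_of_mem_erase hx)]
  rw [hp φ, hp (Function.update φ e o), hrest, Function.update_self]
  ring

theorem ex_eq_ex_resample (e : E) (X : (E → O) → ℝ) :
    Ex M X = Ex M fun φ => ∑ o, Pr M (fun φ' => φ' e = o) * X (Function.update φ e o) := by
  -- Swapping the state of `e` with its resampled state preserves the joint distribution.
  have hswap : Function.Involutive
      fun x : (E → O) × O => ((Function.update x.1 e x.2, x.1 e) : (E → O) × O) := by
    rintro ⟨φ, o⟩
    simp
  calc Ex M X
      = ∑ φ, ∑ o, M.p φ * Pr M (fun φ' => φ' e = o) * X φ :=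
        sum_congr rfl fun φ _ => by rw [← sum_mul, ← mul_sum, sum_pr_apply_eq, mul_one]
    _ = ∑ x : (E → O) × O, M.p x.1 * Pr M (fun φ' => φ' e = x.2) * X x.1 :=
        by rw [Fintype.sum_prod_type]
    _ = ∑ x : (E → O) × O,
          M.p x.1 * Pr M (fun φ' => φ' e = x.2) * X (Function.update x.1 e x.2) :=
        Fintype.sum_equiv hswap.toPerm _ _ fun ⟨φ, o⟩ => by
          simp [p_mul_pr_eq_p_update_mul_pr M φ e o]
    _ = ∑ φ, ∑ o, M.p φ * Pr M (fun φ' => φ' e = o) * X (Function.update φ e o) :=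
        by rw [Fintype.sum_prod_type]
    _ = _ := by simp only [Ex, mul_sum, mul_assoc]

theorem ex_apply (e : E) (h : O → ℝ) :
    Ex M (fun φ => h (φ e)) = ∑ o, Pr M (fun φ => φ e = o) * h o := by
  rw [ex_eq_ex_resample M e]
  simp only [Function.update_self, ex_const]

theorem ex_ite_eq_pr_mul_ex {A : (E → O) → Prop} {e : E}
    (hA : ∀ φ o, A (Function.update φ e o) ↔ A φ) (h : O → ℝ) :
    Ex M (fun φ => if A φ then h (φ e) else 0) = Pr M A * Ex M fun φ => h (φ e) := by
  rw [ex_eq_ex_resample M e, ex_apply, ← ex_ite_const]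
  congr! 2 with φ
  by_cases hφ : A φ <;> simp [hA, hφ]

end Probability

section Execution

variable {M} {π : Sub E O → E}

theorem execAux_subext_toSub (φ : E → O) (n : ℕ) : subext (execAux M π φ n) (toSub φ) := by
  induction n with
  | zero => intro e o he; cases he
  | succ n ih =>
    simp only [execAux, stepPol]
    split_ifs
    · intro e o he
      simp only [updateSub] at he
      split_ifs at he with heq
      · subst heq
        exact he
      · exact ih e o he
    · exact ih

theorem visits.subext_toSub {φ : E → O} {ψ : Sub E O} (h : visits M π φ ψ) :
    subext ψ (toSub φ) := by
  obtain ⟨n, rfl⟩ := h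
  exact execAux_subext_toSub φ n

theorem execAux_succ_apply_ne_none {φ : E → O} {n : ℕ} (h : M.f (execAux M π φ n) < M.Q) :
    execAux M π φ (n + 1) (π (execAux M π φ n)) ≠ none := by
  simp [execAux, stepPol, h, updateSub]

theorem IsPolicy.subext_stepPol (hπ : IsPolicy M π) (φ : E → O) (ψ : Sub E O) :
    subext ψ (stepPol M π φ ψ) := by
  unfold stepPol
  split_ifs with h
  · exact subext_updateSub (hπ ψ h) _
  · exact .refl _

theorem IsPolicy.subext_execAux_succ (hπ : IsPolicy M π) (φ : E → O) (n : ℕ) :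
    subext (execAux M π φ n) (execAux M π φ (n + 1)) :=
  hπ.subext_stepPol φ _

theorem IsPolicy.le_card_execAux (hπ : IsPolicy M π) (φ : E → O) (n : ℕ)
    (hn : M.f (execAux M π φ n) < M.Q) :
    n ≤ #{e | execAux M π φ n e ≠ none} := by
  induction n with
  | zero => exact Nat.zero_le _
  | succ n ih =>
    have hext := hπ.subext_execAux_succ φ n
    have hlt : M.f (execAux M π φ n) < M.Q := (M.f_mono _ _ hext).trans_lt hn
    have hssub : ({e | execAux M π φ n e ≠ none} : Finset E) ⊂
        ({e | execAux M π φ (n + 1) e ≠ none} : Finset E) := by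
      refine (ssubset_iff_of_subset fun e => ?_).mpr ⟨π (execAux M π φ n), ?_, ?_⟩
      · simpa using mt hext.eq_none
      · simpa using execAux_succ_apply_ne_none hlt
      · simpa using hπ _ hlt
    exact (ih hlt).trans_lt (card_lt_card hssub)

theorem IsPolicy.le_f_cover (hπ : IsPolicy M π) (φ : E → O) : M.Q ≤ M.f (cover M π φ) := by
  by_contra! hlt
  have hall : ∀ e, cover M π φ e ≠ none := by
    have huniv := eq_univ_of_card _ ((card_le_univ _).antisymm (hπ.le_card_execAux φ _ hlt))
    simpa [cover, filter_eq_self] using huniv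
  have hcover : cover M π φ = toSub φ :=
    (execAux_subext_toSub φ _).eq_of_eq_none fun e he => absurd he (hall e)
  exact hlt.ne (hcover ▸ M.f_cover φ)

theorem IsPolicy.execAux_update (hπ : IsPolicy M π) {φ : E → O} {e : E} (o : O) (n : ℕ)
    (h : execAux M π φ n e = none) :
    execAux M π (Function.update φ e o) n = execAux M π φ n := by
  induction n with
  | zero => rfl
  | succ n ih =>
    simp only [execAux, ih ((hπ.subext_execAux_succ φ n).eq_none h), stepPol]
    split_ifs with hlt
    · have hne : π (execAux M π φ n) ≠ e := by
        rintro rfl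
        exact execAux_succ_apply_ne_none hlt h
      rw [Function.update_of_ne hne]
    · rfl

theorem IsPolicy.visits_update_iff (hπ : IsPolicy M π) {e : E} {ψ : Sub E O} (hψ : ψ e = none)
    (φ : E → O) (o : O) : visits M π (Function.update φ e o) ψ ↔ visits M π φ ψ := by
  refine update_iff_of_imp (P := fun φ => visits M π φ ψ) ?_ φ o
  rintro φ o ⟨n, rfl⟩
  exact ⟨n, hπ.execAux_update o n hψ⟩

theorem mem_ssel {e : E} {φ : E → O} : e ∈ Ssel M π φ ↔ cover M π φ e ≠ none := by
  simp [Ssel]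

theorem IsPolicy.mem_ssel_update_iff (hπ : IsPolicy M π) (e : E) (φ : E → O) (o : O) :
    e ∈ Ssel M π (Function.update φ e o) ↔ e ∈ Ssel M π φ := by
  simp only [mem_ssel]
  refine not_congr (update_iff_of_imp (P := fun φ => cover M π φ e = none) ?_ φ o)
  intro φ o h
  rwa [cover, hπ.execAux_update o _ h]

theorem ex_C (M : Problem E O) (π : Sub E O → E) :
    Ex M (C M π) = ∑ e, Pr M (fun φ => e ∈ Ssel M π φ) * M.c e := by
  simp only [← ex_ite_const, ← ex_sum]
  congr! 2 with φ
  simp [C, Ssel, sum_filter]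

end Execution

section MarginalGain

theorem fm_nonneg {ψ : Sub E O} {e : E} (he : ψ e = none) (φ : E → O) : 0 ≤ Fm M ψ e φ :=
  sub_nonneg.mpr (M.f_mono _ _ (subext_updateSub he _))

theorem f_overlay_sub_le_sum_fm {ψ : Sub E O} {A : Finset E} (hA : ∀ e ∈ A, ψ e = none)
    (φ : E → O) : M.f (overlay ψ A φ) - M.f ψ ≤ ∑ e ∈ A, Fm M ψ e φ := by
  induction A using Finset.induction_on with
  | empty => simp [overlay_empty]
  | insert e A heA ih =>
    obtain ⟨he, hA⟩ := (forall_mem_insert e A _).mp hA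
    have hsub := M.f_submod ψ (overlay ψ A φ) e (φ e) (subext_overlay hA φ)
      (by simpa [overlay, heA] using he)
    rw [overlay_insert, sum_insert heA, Fm]
    linarith [ih hA]

variable {M}

theorem IsPolicy.sub_f_le_sum_fm {π : Sub E O → E} (hπ : IsPolicy M π) {ψ : Sub E O} {φ : E → O}
    (hψ : subext ψ (toSub φ)) :
    M.Q - M.f ψ ≤ ∑ e ∈ Ssel M π φ with ψ e = none, Fm M ψ e φ := by
  set A := {e ∈ Ssel M π φ | ψ e = none}
  have hcover : subext (cover M π φ) (overlay ψ A φ) := by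
    intro e o he
    obtain rfl : φ e = o := Option.some.inj (execAux_subext_toSub φ _ e o he)
    cases hψe : ψ e with
    | none => simp [overlay, A, hψe, mem_ssel, he]
    | some o => simpa [overlay, A, hψe, toSub] using (hψ e o hψe).symm
  calc M.Q - M.f ψ
      ≤ M.f (overlay ψ A φ) - M.f ψ := by
        gcongr
        exact (hπ.le_f_cover φ).trans (M.f_mono _ _ hcover)
    _ ≤ ∑ e ∈ A, Fm M ψ e φ :=
        f_overlay_sub_le_sum_fm M (fun e he => (mem_filter.mp he).2) φ

theorem price_nonneg {ψ : Sub E O} {e : E} (he : ψ e = none) : 0 ≤ price M ψ e :=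
  div_nonneg (M.c_pos e).le (ex_nonneg M (fm_nonneg M he))

theorem IsGreedy.price_mul_ex_fm_le {α : ℝ} {σ : Sub E O → E} (hσ : IsGreedy M α σ) (hα : 0 ≤ α)
    {ψ : Sub E O} (hψ : M.f ψ < M.Q) {e : E} (he : ψ e = none) :
    price M ψ (σ ψ) * Ex M (Fm M ψ e) ≤ α * M.c e := by
  rcases (ex_nonneg M (fm_nonneg M (hσ.1 ψ hψ))).eq_or_lt with hzero | hpos
  · -- An item of zero expected gain has price `c / 0 = 0`.
    simpa [price, ← hzero] using mul_nonneg hα (M.c_pos e).le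
  · rw [price, div_mul_eq_mul_div, div_le_iff₀ hpos]
    exact hσ.2 ψ hψ e he

end MarginalGain

section Charging

/-- Item `e`, selected by `π`, is charged to the node `ψ` of `σ`: among the nodes visited by `σ`
that have utility at most `b` and at which `e` is unobserved, `ψ` is the last one. -/
def chargedTo (σ π : Sub E O → E) (b : ℝ) (ψ : Sub E O) (e : E) (φ : E → O) : Prop :=
  e ∈ Ssel M π φ ∧ ψ e = none ∧ visits M σ φ ψ ∧ M.f ψ ≤ b ∧
    ∀ ψ' : Sub E O, ψ' e = none → visits M σ φ ψ' → M.f ψ' ≤ b → subext ψ' ψ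

variable {M} {σ π : Sub E O → E} {b : ℝ} {ψ ψ' : Sub E O} {e : E} {φ : E → O}

theorem chargedTo.unique (h : chargedTo M σ π b ψ e φ) (h' : chargedTo M σ π b ψ' e φ) :
    ψ = ψ' := by
  obtain ⟨-, hnone, hvis, hle, hlast⟩ := h
  obtain ⟨-, hnone', hvis', hle', hlast'⟩ := h'
  exact (hlast' ψ hnone hvis hle).antisymm (hlast ψ' hnone' hvis' hle')

theorem leadsTo.chargedTo (h : leadsTo M σ b ψ φ) (he : e ∈ Ssel M π φ) (hψ : ψ e = none) :
    chargedTo M σ π b ψ e φ :=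
  ⟨he, hψ, h.1, h.2.1, fun ψ' _ => h.2.2 ψ'⟩

theorem chargedTo_update_iff (hσ : IsPolicy M σ) (hπ : IsPolicy M π) (φ : E → O) (o : O) :
    chargedTo M σ π b ψ e (Function.update φ e o) ↔ chargedTo M σ π b ψ e φ := by
  simp +contextual only [chargedTo, hπ.mem_ssel_update_iff, hσ.visits_update_iff,
    and_congr_right_iff, implies_true]

theorem pr_leadsTo_mul_sub_le (hσ : IsPolicy M σ) (hπ : IsPolicy M π) (b : ℝ) (ψ : Sub E O) :
    Pr M (leadsTo M σ b ψ) * (M.Q - b) ≤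
      ∑ e, Pr M (chargedTo M σ π b ψ e) * Ex M (Fm M ψ e) := by
  have hindep : ∀ e, Ex M (fun φ => if chargedTo M σ π b ψ e φ then Fm M ψ e φ else 0) =
      Pr M (chargedTo M σ π b ψ e) * Ex M (Fm M ψ e) := fun e =>
    ex_ite_eq_pr_mul_ex M (chargedTo_update_iff hσ hπ) fun o => M.f (updateSub ψ e o) - M.f ψ
  simp only [← hindep, ← ex_sum, ← ex_ite_const]
  refine ex_mono M fun φ => ?_
  have hnonneg : ∀ e, 0 ≤ if chargedTo M σ π b ψ e φ then Fm M ψ e φ else 0 := fun e => by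
    split_ifs with h
    exacts [fm_nonneg M h.2.1 φ, le_rfl]
  split_ifs with hlead
  · calc M.Q - b
        ≤ M.Q - M.f ψ := by linarith [hlead.2.1]
      _ ≤ ∑ e ∈ Ssel M π φ with ψ e = none, Fm M ψ e φ :=
          hπ.sub_f_le_sum_fm hlead.1.subext_toSub
      _ = ∑ e ∈ Ssel M π φ with ψ e = none,
            if chargedTo M σ π b ψ e φ then Fm M ψ e φ else 0 :=
          sum_congr rfl fun e he => by
            obtain ⟨heS, hψe⟩ := mem_filter.mp he
            rw [if_pos (hlead.chargedTo heS hψe)]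
      _ ≤ ∑ e, if chargedTo M σ π b ψ e φ then Fm M ψ e φ else 0 :=
          sum_le_univ_sum_of_nonneg hnonneg
  · exact sum_nonneg fun e _ => hnonneg e

theorem sum_pr_chargedTo_le (e : E) :
    ∑ ψ, Pr M (chargedTo M σ π b ψ e) ≤ Pr M fun φ => e ∈ Ssel M π φ :=
  sum_pr_le_of_unique M (fun _ _ h => h.1) fun _ _ _ => chargedTo.unique

variable {α : ℝ}

theorem IsGreedy.price_mul_pr_leadsTo_le (hσ : IsGreedy M α σ) (hα : 0 ≤ α)
    (hπ : IsPolicy M π) (hb : b < M.Q) (ψ : Sub E O) :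
    price M ψ (σ ψ) * (Pr M (leadsTo M σ b ψ) * (M.Q - b)) ≤
      ∑ e, Pr M (chargedTo M σ π b ψ e) * (α * M.c e) := by
  by_cases hψ : M.f ψ < M.Q
  · calc price M ψ (σ ψ) * (Pr M (leadsTo M σ b ψ) * (M.Q - b))
        ≤ price M ψ (σ ψ) * ∑ e, Pr M (chargedTo M σ π b ψ e) * Ex M (Fm M ψ e) :=
          mul_le_mul_of_nonneg_left (pr_leadsTo_mul_sub_le hσ.1 hπ b ψ)
            (price_nonneg (hσ.1 ψ hψ))
      _ = ∑ e, Pr M (chargedTo M σ π b ψ e) * (price M ψ (σ ψ) * Ex M (Fm M ψ e)) := by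
          simp only [mul_sum, mul_left_comm]
      _ ≤ ∑ e, Pr M (chargedTo M σ π b ψ e) * (α * M.c e) := by
          refine sum_le_sum fun e _ => ?_
          by_cases he : ψ e = none
          · exact mul_le_mul_of_nonneg_left (hσ.price_mul_ex_fm_le hα hψ he) (pr_nonneg M _)
          · simp [pr_eq_zero M fun φ (h : chargedTo M σ π b ψ e φ) => he h.2.1]
  · have hnever : Pr M (leadsTo M σ b ψ) = 0 :=
      pr_eq_zero M fun φ h => hψ (h.2.1.trans_lt hb)
    rw [hnever, zero_mul, mul_zero]
    exact sum_nonneg fun e _ => mul_nonneg (pr_nonneg M _) (mul_nonneg hα (M.c_pos e).le)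

theorem IsGreedy.sum_price_mul_pr_leadsTo_le (hσ : IsGreedy M α σ) (hα : 0 ≤ α)
    (hπ : IsPolicy M π) (hb : b < M.Q) :
    ∑ ψ, price M ψ (σ ψ) * (Pr M (leadsTo M σ b ψ) * (M.Q - b)) ≤ α * Ex M (C M π) :=
  calc ∑ ψ, price M ψ (σ ψ) * (Pr M (leadsTo M σ b ψ) * (M.Q - b))
      ≤ ∑ ψ, ∑ e, Pr M (chargedTo M σ π b ψ e) * (α * M.c e) :=
        sum_le_sum fun ψ _ => hσ.price_mul_pr_leadsTo_le hα hπ hb ψ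
    _ = ∑ e, (∑ ψ, Pr M (chargedTo M σ π b ψ e)) * (α * M.c e) := by
        rw [sum_comm]
        simp only [sum_mul]
    _ ≤ ∑ e, Pr M (fun φ => e ∈ Ssel M π φ) * (α * M.c e) :=
        sum_le_sum fun e _ => mul_le_mul_of_nonneg_right (sum_pr_chargedTo_le e)
          (mul_nonneg hα (M.c_pos e).le)
    _ = α * Ex M (C M π) := by
        simp only [ex_C, mul_sum, mul_left_comm]

end Charging

theorem ex_lam (σ : Sub E O → E) (b ε : ℝ) :
    Ex M (lam M σ b ε) = ∑ ψ, Pr M (leadsTo M σ b ψ) * (price M ψ (σ ψ) * ε) := by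
  simp only [← ex_ite_const, ← ex_sum]
  rfl

theorem lam_bound_general {α : ℝ} (hα : 0 ≤ α) {σ : Sub E O → E} (hσ : IsGreedy M α σ)
    {π : Sub E O → E} (hπ : IsPolicy M π) {b : ℝ} (hb : b < M.Q) {ε : ℝ} (hε : 0 ≤ ε) :
    Ex M (lam M σ b ε) ≤ α * Ex M (C M π) * (ε / (M.Q - b)) := by
  have hQb : 0 < M.Q - b := sub_pos.mpr hb
  calc Ex M (lam M σ b ε)
      = (∑ ψ, price M ψ (σ ψ) * (Pr M (leadsTo M σ b ψ) * (M.Q - b))) * (ε / (M.Q - b)) := by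
        rw [ex_lam, sum_mul]
        refine sum_congr rfl fun ψ _ => ?_
        field_simp
    _ ≤ α * Ex M (C M π) * (ε / (M.Q - b)) :=
        mul_le_mul_of_nonneg_right (hσ.sum_price_mul_pr_leadsTo_le hα hπ hb) (by positivity)

/-- For every marker index `i`:
`E[λ_i] ≤ α·E[C(π*)]·ε_i / (Q − f(ρ_i))`. -/
theorem lam_bound
    (M : Problem E O) (α : ℝ) (hα : 1 ≤ α)
    (σ : Sub E O → E) (hσ : IsGreedy M α σ)
    (πs : Sub E O → E) (hπs : IsOptimal M πs)
    (t : ℕ) (ρ : ℕ → Sub E O)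
    (hcard : t = (Nnodes M σ).card)
    (hρmem : ∀ i, 1 ≤ i → i ≤ t → ρ i ∈ Nnodes M σ)
    (hρinj : ∀ i j, 1 ≤ i → i ≤ t → 1 ≤ j → j ≤ t → ρ i = ρ j → i = j)
    (hρmono : ∀ i j, 1 ≤ i → i ≤ j → j ≤ t → M.f (ρ i) ≤ M.f (ρ j))
    (ε : ℕ → ℝ)
    (hε : ∀ i, 1 ≤ i → i < t → ε i = M.f (ρ (i + 1)) - M.f (ρ i))
    (hεt : 1 ≤ t → ε t = M.Q - M.f (ρ t))
    (i : ℕ) (hi1 : 1 ≤ i) (hit : i ≤ t) :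
    Ex M (lam M σ (M.f (ρ i)) (ε i))
      ≤ α * Ex M (C M πs) * (ε i / (M.Q - M.f (ρ i))) := by
  have hf : M.f (ρ i) < M.Q := (mem_filter.mp (hρmem i hi1 hit)).2.1
  have hε_nonneg : 0 ≤ ε i := by
    rcases hit.eq_or_lt with rfl | hlt
    · rw [hεt hi1]
      exact sub_nonneg.mpr hf.le
    · rw [hε i hi1 hlt]
      exact sub_nonneg.mpr (hρmono i (i + 1) hi1 i.le_succ hlt)
  exact lam_bound_general M (zero_le_one.trans hα) hσ hπs.1 hf hε_nonneg

end
end SSC
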